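/- arXiv:1907.07019 — 5 statements merged into one kernel-verified Lean document; each statement's English description precedes it below -/
import Mathlib

section
/- π₁ is commensurate to π₀ if and only if (π₀,π₁) satisfies extended Bayesianism and π₀*(S₁) > 0. -/
open MeasureTheory Set ENNReal

/-- The support of a measure `π` on `(Ω, m)`: the intersection of all `m`-measurable
sets of `π`-measure one. -/
def spt {Ω : Type*} (m : MeasurableSpace Ω) (π : @Measure Ω m) : Set Ω :=
  ⋂₀ {E : Set Ω | @MeasurableSet Ω m E ∧ π E = 1}

/-- The outer measure on richer events induced by a measure `π` on `(Ω, m)`: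
`π*(E) = inf {π F : F m-measurable, E ⊆ F}`. -/
noncomputable def outerM {Ω : Type*} (m : MeasurableSpace Ω) (π : @Measure Ω m)
    (E : Set Ω) : ℝ≥0∞ :=
  ⨅ (F : Set Ω) (_ : @MeasurableSet Ω m F ∧ E ⊆ F), π F

/-- Extended Bayesianism: there is a probability measure `π̄` on the finer σ-algebra `m1`
extending `π₀` (EB1) such that, whenever `π₀*(S₁) > 0`, `π̄(S₁) > 0` and `π₁` is the
conditional of `π̄` on `S₁` (EB2). -/
def ExtendedBayesianism {Ω : Type*} (m0 m1 : MeasurableSpace Ω)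
    (π₀ : @Measure Ω m0) (π₁ : @Measure Ω m1) : Prop :=
  ∃ πb : @Measure Ω m1, @IsProbabilityMeasure Ω m1 πb ∧
    (∀ E : Set Ω, @MeasurableSet Ω m0 E → πb E = π₀ E) ∧
    (0 < outerM m0 π₀ (spt m1 π₁) →
      0 < πb (spt m1 π₁) ∧
      ∀ E : Set Ω, @MeasurableSet Ω m1 E →
        π₁ E = πb (E ∩ spt m1 π₁) / πb (spt m1 π₁))

/-- `π₁` is commensurate to `π₀`: for all `E, F ∈ Σ₀` with `E ⊆ S₁`,
(C1) `π₀ F = 0 → π₁ F = 0` and (C2) `π₀ E * π₁ F ≤ π₁ E * π₀ F`. -/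
def Commensurate {Ω : Type*} (m0 m1 : MeasurableSpace Ω)
    (π₀ : @Measure Ω m0) (π₁ : @Measure Ω m1) : Prop :=
  ∀ E F : Set Ω, @MeasurableSet Ω m0 E → @MeasurableSet Ω m0 F → E ⊆ spt m1 π₁ →
    (π₀ F = 0 → π₁ F = 0) ∧ π₀ E * π₁ F ≤ π₁ E * π₀ F

/-- `π₁` is boundedly commensurate to `π₀`: commensurate, and in addition (C3)
`inf {π₀ F / π₁ F : F ∈ Σ₀, π₁ F > 0} > 0`. -/
def BoundedlyCommensurate {Ω : Type*} (m0 m1 : MeasurableSpace Ω)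
    (π₀ : @Measure Ω m0) (π₁ : @Measure Ω m1) : Prop :=
  Commensurate m0 m1 π₀ π₁ ∧
    0 < ⨅ (F : Set Ω) (_ : @MeasurableSet Ω m0 F ∧ 0 < π₁ F), π₀ F / π₁ F

/-! Both sides hold exactly when some `0 < l < ∞` satisfies `l * π₁ ≤ π₀` on `Σ₀`, with equality
on the `Σ₀`-events inside `S₁`. If `π̄` is an extended prior, then `l = π̄ S₁` works. Conversely,
given `l`, the leftover `π₀ - l * π₁` gives no mass to the `Σ₀`-events inside `S₁`, so every atom of
`Σ₀` that it charges has a point outside `S₁` to carry that mass; moving the leftover to such points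
and adding `l * π₁` produces `π̄`. Commensurability provides `l` as the infimum of the ratios
`π₀ F / π₁ F`, which is attained, hence positive, when `Σ₀` is finite. -/

section Extension

lemma measurable_of_forall_mem_measurableAtom {α β : Type*} [Countable α]
    {mα : MeasurableSpace α} {mβ : MeasurableSpace β} {f : α → β}
    (hf : ∀ x, ∀ y ∈ measurableAtom x, f y = f x) : Measurable f := by
  intro T _
  have hT : f ⁻¹' T = ⋃ x ∈ f ⁻¹' T, measurableAtom x := by
    refine Subset.antisymm (fun x hx => mem_biUnion hx (mem_measurableAtom_self x)) ?_
    refine iUnion₂_subset fun x hx y hy => ?_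
    rwa [mem_preimage, hf x y hy]
  rw [hT]
  exact .biUnion (to_countable _) fun x _ => .measurableAtom_of_countable x

lemma preimage_eq_of_forall_mem_measurableAtom {α : Type*} {_ : MeasurableSpace α} {f : α → α}
    (hf : ∀ x, f x ∈ measurableAtom x) {E : Set α} (hE : MeasurableSet E) : f ⁻¹' E = E :=
  Subset.antisymm
    (fun x hx => by_contra fun hxE => mem_of_mem_measurableAtom (hf x) hE.compl hxE hx)
    fun x hx => mem_of_mem_measurableAtom (hf x) hE hx

lemma exists_measurable_mem_measurableAtom_preimage_subset {α : Type*} [Countable α]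
    {m : MeasurableSpace α} (S : Set α) :
    ∃ f : α → α, Measurable[m, ⊤] f ∧ (∀ x, f x ∈ measurableAtom x) ∧ f ⁻¹' S ⊆ S := by
  have exists_point (A : Set α) (hA : A.Nonempty) : ∃ z ∈ A, z ∈ S → A ⊆ S := by
    by_cases hAS : A ⊆ S
    · exact ⟨hA.some, hA.some_mem, fun _ => hAS⟩
    · obtain ⟨z, hzA, hzS⟩ := not_subset.1 hAS
      exact ⟨z, hzA, fun hz => absurd hz hzS⟩
  choose g hgA hgS using exists_point
  have atom_nonempty (x : α) : (measurableAtom x).Nonempty := ⟨x, mem_measurableAtom_self x⟩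
  refine ⟨fun x => g _ (atom_nonempty x), ?_, fun x => hgA _ (atom_nonempty x),
    fun x hx => hgS _ (atom_nonempty x) hx (mem_measurableAtom_self x)⟩
  refine measurable_of_forall_mem_measurableAtom fun x y hy => ?_
  simp only [measurableAtom_eq_of_mem hy]

variable {Ω : Type*} [Countable Ω] {m0 m1 : MeasurableSpace Ω} {S : Set Ω}

lemma exists_trim_eq_measure_eq_zero (hle : m0 ≤ m1) {ρ : Measure[m0] Ω}
    (hS : MeasurableSet[m1] S) (hρ : ∀ E, MeasurableSet[m0] E → E ⊆ S → ρ E = 0) :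
    ∃ ρ' : Measure[m1] Ω, ρ'.trim hle = ρ ∧ ρ' S = 0 := by
  obtain ⟨f, hf_top, hf_atom, hfS⟩ :=
    exists_measurable_mem_measurableAtom_preimage_subset (m := m0) S
  have hf : Measurable[m0, m1] f := hf_top.mono le_rfl le_top
  have map_eq (E : Set Ω) (hE : MeasurableSet[m1] E) :
      @Measure.map Ω Ω m0 m1 f ρ E = ρ (f ⁻¹' E) :=
    @Measure.map_apply Ω Ω m0 m1 ρ f hf E hE
  refine ⟨@Measure.map Ω Ω m0 m1 f ρ, @Measure.ext Ω m0 _ _ fun E hE => ?_, ?_⟩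
  · rw [trim_measurableSet_eq hle hE, map_eq E (hle E hE),
      preimage_eq_of_forall_mem_measurableAtom hf_atom hE]
  · rw [map_eq S hS]
    exact hρ _ (hf hS) hfS

lemma exists_trim_eq_forall_subset_eq (hle : m0 ≤ m1) {π : Measure[m0] Ω} {ν : Measure[m1] Ω}
    [IsFiniteMeasure ν] (hS : MeasurableSet[m1] S) (hν : ν.trim hle ≤ π)
    (hπ : ∀ E, MeasurableSet[m0] E → E ⊆ S → π E ≤ ν E) :
    ∃ πb : Measure[m1] Ω, πb.trim hle = π ∧ ∀ E ⊆ S, πb E = ν E := by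
  have sub_null (E : Set Ω) (hE : MeasurableSet[m0] E) (hES : E ⊆ S) :
      (π - ν.trim hle) E = 0 := by
    rw [Measure.sub_apply hE hν, trim_measurableSet_eq hle hE]
    exact tsub_eq_zero_of_le (hπ E hE hES)
  obtain ⟨ρ, hρ_trim, hρS⟩ := exists_trim_eq_measure_eq_zero hle hS sub_null
  refine ⟨ρ + ν, ?_, fun E hES => ?_⟩
  · rw [trim_add, hρ_trim, Measure.sub_add_cancel_of_le hν]
  · rw [Measure.add_apply, measure_mono_null hES hρS, zero_add]

end Extension

section Support

lemma exists_countable_subset_sInter_eq {α : Type*} [Countable α] (𝒮 : Set (Set α)) :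
    ∃ 𝒯 ⊆ 𝒮, 𝒯.Countable ∧ ⋂₀ 𝒯 = ⋂₀ 𝒮 := by
  have exists_notMem (x : ↥(⋂₀ 𝒮)ᶜ) : ∃ E ∈ 𝒮, ↑x ∉ E := by
    simpa only [mem_compl_iff, mem_sInter, not_forall, exists_prop] using x.2
  choose E hE𝒮 hxE using exists_notMem
  have range_subset : range E ⊆ 𝒮 := range_subset_iff.2 hE𝒮
  refine ⟨range E, range_subset, countable_range E,
    Subset.antisymm (fun x hx => by_contra fun hx𝒮 => ?_) (sInter_subset_sInter range_subset)⟩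
  exact hxE ⟨x, hx𝒮⟩ (hx _ (mem_range_self _))

variable {Ω : Type*} [Countable Ω] {m : MeasurableSpace Ω} (π : Measure Ω)

lemma measurableSet_spt : MeasurableSet (spt m π) := by
  obtain ⟨𝒯, h𝒯, h𝒯_countable, h𝒯_eq⟩ :=
    exists_countable_subset_sInter_eq {E : Set Ω | MeasurableSet E ∧ π E = 1}
  rw [spt, ← h𝒯_eq]
  exact .sInter h𝒯_countable fun E hE => (h𝒯 hE).1

variable [IsProbabilityMeasure π]

lemma measure_compl_spt : π (spt m π)ᶜ = 0 := by
  obtain ⟨𝒯, h𝒯, h𝒯_countable, h𝒯_eq⟩ :=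
    exists_countable_subset_sInter_eq {E : Set Ω | MeasurableSet E ∧ π E = 1}
  rw [spt, ← h𝒯_eq, ← mem_ae_iff, countable_sInter_mem h𝒯_countable]
  exact fun E hE => (mem_ae_iff_prob_eq_one (h𝒯 hE).1).2 (h𝒯 hE).2

lemma measure_inter_spt (E : Set Ω) : π (E ∩ spt m π) = π E :=
  measure_inter_conull (measure_compl_spt π)

lemma measure_spt : π (spt m π) = 1 :=
  (prob_compl_eq_zero_iff (measurableSet_spt π)).1 (measure_compl_spt π)

end Support

section Ratio

variable {Ω : Type*} {m0 m1 : MeasurableSpace Ω} {π₀ : Measure[m0] Ω} {π₁ : Measure[m1] Ω}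

/-- The infimum appearing in (C3), over the `Σ₀`-events charged by `π₁`. It is the scale by which
`π₁` has to be shrunk to lie below `π₀`. -/
noncomputable def infRatio (π₀ : Measure[m0] Ω) (π₁ : Measure[m1] Ω) : ℝ≥0∞ :=
  ⨅ (F : Set Ω) (_ : MeasurableSet[m0] F ∧ 0 < π₁ F), π₀ F / π₁ F

lemma infRatio_mul_le {F : Set Ω} (hF : MeasurableSet[m0] F) :
    infRatio π₀ π₁ * π₁ F ≤ π₀ F := by
  rcases eq_zero_or_pos (π₁ F) with h | h
  · simp only [h, mul_zero, zero_le]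
  · exact ENNReal.mul_le_of_le_div (iInf₂_le F ⟨hF, h⟩)

lemma infRatio_le_one [IsProbabilityMeasure π₀] [IsProbabilityMeasure π₁] :
    infRatio π₀ π₁ ≤ 1 := by
  simpa only [measure_univ, mul_one] using
    infRatio_mul_le (π₀ := π₀) (π₁ := π₁) (@MeasurableSet.univ Ω m0)

lemma infRatio_pos_of_finite [IsFiniteMeasure π₁] (hfin : {F | MeasurableSet[m0] F}.Finite)
    (hac : ∀ F, MeasurableSet[m0] F → π₀ F = 0 → π₁ F = 0) : 0 < infRatio π₀ π₁ := by
  let charged : Set (Set Ω) := {F | MeasurableSet[m0] F ∧ 0 < π₁ F}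
  have infRatio_eq : infRatio π₀ π₁ = sInf ((fun F => π₀ F / π₁ F) '' charged) :=
    sInf_image.symm
  rw [infRatio_eq]
  rcases charged.eq_empty_or_nonempty with hempty | hnonempty
  · rw [hempty, image_empty, sInf_empty]
    exact zero_lt_top
  · have charged_finite : charged.Finite := hfin.subset fun F hF => hF.1
    rw [(charged_finite.image _).lt_csInf_iff (hnonempty.image _), forall_mem_image]
    exact fun F hF =>
      ENNReal.div_pos (fun hF₀ => hF.2.ne' (hac F hF.1 hF₀)) (measure_ne_top π₁ F)

lemma Commensurate.measure_eq_zero (h : Commensurate m0 m1 π₀ π₁) {F : Set Ω}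
    (hF : MeasurableSet[m0] F) (hF₀ : π₀ F = 0) : π₁ F = 0 :=
  (h ∅ F (@MeasurableSet.empty Ω m0) hF (empty_subset _)).1 hF₀

lemma Commensurate.le_infRatio_mul [IsProbabilityMeasure π₀] [IsProbabilityMeasure π₁]
    (h : Commensurate m0 m1 π₀ π₁) {E : Set Ω} (hE : MeasurableSet[m0] E)
    (hES : E ⊆ spt m1 π₁) : π₀ E ≤ infRatio π₀ π₁ * π₁ E := by
  have hfin : infRatio π₀ π₁ ≠ ⊤ := ne_top_of_le_ne_top one_ne_top infRatio_le_one
  rw [← ENNReal.div_le_iff_le_mul (.inr hfin) (.inl (measure_ne_top π₁ E))]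
  refine le_iInf₂ fun F ⟨hF, hF_pos⟩ => ?_
  have hratio : π₀ F / π₁ F ≠ ⊤ := ENNReal.div_ne_top (measure_ne_top π₀ F) hF_pos.ne'
  rw [ENNReal.div_le_iff_le_mul (.inr hratio) (.inl (measure_ne_top π₁ E)),
    mul_comm, ← mul_div_assoc,
    ENNReal.le_div_iff_mul_le (.inl hF_pos.ne') (.inl (measure_ne_top π₁ F))]
  exact (h E F hE hF hES).2

lemma Commensurate.boundedlyCommensurate_of_finite [IsFiniteMeasure π₁]
    (h : Commensurate m0 m1 π₀ π₁) (hfin : {F | MeasurableSet[m0] F}.Finite) :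
    BoundedlyCommensurate m0 m1 π₀ π₁ :=
  ⟨h, infRatio_pos_of_finite hfin fun _ => h.measure_eq_zero⟩

end Ratio

section SupportMass

variable {Ω : Type*} {m0 m1 : MeasurableSpace Ω} {π₀ : Measure[m0] Ω} {π₁ : Measure[m1] Ω}
  {l : ℝ≥0∞}

/-- `l` can serve as the mass `π̄ S₁` of the support of `π₁` under an extended prior `π̄`. Only `≤`
is required inside `S₁`, as `mul_le` contains the other inequality. -/
structure IsSupportMass (π₀ : Measure[m0] Ω) (π₁ : Measure[m1] Ω) (l : ℝ≥0∞) : Prop where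
  pos : 0 < l
  ne_top : l ≠ ⊤
  mul_le : ∀ F, MeasurableSet[m0] F → l * π₁ F ≤ π₀ F
  le_mul : ∀ E, MeasurableSet[m0] E → E ⊆ spt m1 π₁ → π₀ E ≤ l * π₁ E

lemma BoundedlyCommensurate.isSupportMass_infRatio [IsProbabilityMeasure π₀]
    [IsProbabilityMeasure π₁] (h : BoundedlyCommensurate m0 m1 π₀ π₁) :
    IsSupportMass π₀ π₁ (infRatio π₀ π₁) where
  pos := h.2
  ne_top := ne_top_of_le_ne_top one_ne_top infRatio_le_one
  mul_le _ := infRatio_mul_le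
  le_mul _ := h.1.le_infRatio_mul

lemma IsSupportMass.boundedlyCommensurate [IsFiniteMeasure π₁] (h : IsSupportMass π₀ π₁ l) :
    BoundedlyCommensurate m0 m1 π₀ π₁ := by
  refine ⟨fun E F hE hF hES => ⟨fun hF₀ => ?_, ?_⟩, h.pos.trans_le (le_iInf₂ fun F hF => ?_)⟩
  · have hlF : l * π₁ F = 0 := nonpos_iff_eq_zero.1 (hF₀ ▸ h.mul_le F hF)
    exact (mul_eq_zero.1 hlF).resolve_left h.pos.ne'
  · calc
      π₀ E * π₁ F ≤ l * π₁ E * π₁ F := by gcongr; exact h.le_mul E hE hES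
      _ = π₁ E * (l * π₁ F) := by ring
      _ ≤ π₁ E * π₀ F := by gcongr; exact h.mul_le F hF
  · rw [ENNReal.le_div_iff_mul_le (.inl hF.2.ne') (.inl (measure_ne_top π₁ F))]
    exact h.mul_le F hF.1

lemma IsSupportMass.outerM_spt_pos [Countable Ω] [IsProbabilityMeasure π₁]
    (h : IsSupportMass π₀ π₁ l) : 0 < outerM m0 π₀ (spt m1 π₁) := by
  refine h.pos.trans_le (le_iInf₂ fun F ⟨hF, hSF⟩ => ?_)
  calc
    l = l * π₁ (spt m1 π₁) := by rw [measure_spt, mul_one]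
    _ ≤ l * π₁ F := by gcongr
    _ ≤ π₀ F := h.mul_le F hF

lemma IsSupportMass.extendedBayesianism [Countable Ω] [IsProbabilityMeasure π₀]
    [IsProbabilityMeasure π₁] (hle : m0 ≤ m1) (h : IsSupportMass π₀ π₁ l) :
    ExtendedBayesianism m0 m1 π₀ π₁ := by
  have : IsFiniteMeasure (l • π₁) := π₁.smul_finite h.ne_top
  have trim_smul_le : (l • π₁).trim hle ≤ π₀ := Measure.le_iff.2 fun F hF =>
    (trim_measurableSet_eq hle hF).trans_le (h.mul_le F hF)
  obtain ⟨πb, hπb_trim, hπb_spt⟩ :=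
    exists_trim_eq_forall_subset_eq hle (measurableSet_spt π₁) trim_smul_le h.le_mul
  have extends_prior (E : Set Ω) (hE : MeasurableSet[m0] E) : πb E = π₀ E := by
    rw [← hπb_trim, trim_measurableSet_eq hle hE]
  have inter_spt (E : Set Ω) : πb (E ∩ spt m1 π₁) = l * π₁ E := by
    rw [hπb_spt _ inter_subset_right, Measure.smul_apply, smul_eq_mul, measure_inter_spt]
  have spt_mass : πb (spt m1 π₁) = l := by
    simpa only [univ_inter, measure_univ, mul_one] using inter_spt univ
  refine ⟨πb, ⟨?_⟩, extends_prior, fun _ => ⟨spt_mass ▸ h.pos, fun E _ => ?_⟩⟩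
  · rw [extends_prior univ (@MeasurableSet.univ Ω m0), measure_univ]
  · rw [inter_spt, spt_mass, mul_comm, ENNReal.mul_div_cancel_right h.pos.ne' h.ne_top]

lemma ExtendedBayesianism.exists_isSupportMass (hle : m0 ≤ m1)
    (h : ExtendedBayesianism m0 m1 π₀ π₁) (hpos : 0 < outerM m0 π₀ (spt m1 π₁)) :
    ∃ l, IsSupportMass π₀ π₁ l := by
  obtain ⟨πb, _, extends_prior, hcond⟩ := h
  obtain ⟨spt_pos, cond_eq⟩ := hcond hpos
  have spt_ne_top : πb (spt m1 π₁) ≠ ⊤ := measure_ne_top πb _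
  have mul_eq (E : Set Ω) (hE : MeasurableSet[m0] E) :
      πb (spt m1 π₁) * π₁ E = πb (E ∩ spt m1 π₁) := by
    rw [cond_eq E (hle E hE), ENNReal.mul_div_cancel spt_pos.ne' spt_ne_top]
  refine ⟨πb (spt m1 π₁), spt_pos, spt_ne_top, fun F hF => ?_, fun E hE hES => ?_⟩
  · rw [mul_eq F hF, ← extends_prior F hF]
    exact measure_mono inter_subset_left
  · rw [mul_eq E hE, inter_eq_self_of_subset_left hES, extends_prior E hE]

end SupportMass

theorem boundedlyCommensurate_iff_extendedBayesianism {Ω : Type*} [Countable Ω]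
    {m0 m1 : MeasurableSpace Ω} (hle : m0 ≤ m1) (π₀ : Measure[m0] Ω) (π₁ : Measure[m1] Ω)
    [IsProbabilityMeasure π₀] [IsProbabilityMeasure π₁] :
    BoundedlyCommensurate m0 m1 π₀ π₁ ↔
      ExtendedBayesianism m0 m1 π₀ π₁ ∧ 0 < outerM m0 π₀ (spt m1 π₁) := by
  constructor
  · intro h
    have hl := h.isSupportMass_infRatio
    exact ⟨hl.extendedBayesianism hle, hl.outerM_spt_pos⟩
  · rintro ⟨h, hpos⟩
    obtain ⟨l, hl⟩ := h.exists_isSupportMass hle hpos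
    exact hl.boundedlyCommensurate

theorem commensurate_iff_extendedBayesianism_general {Ω : Type*} [Countable Ω]
    {m0 m1 : MeasurableSpace Ω} (hfin : {F | MeasurableSet[m0] F}.Finite) (hle : m0 ≤ m1)
    (π₀ : Measure[m0] Ω) (π₁ : Measure[m1] Ω)
    [IsProbabilityMeasure π₀] [IsProbabilityMeasure π₁] :
    Commensurate m0 m1 π₀ π₁ ↔
      ExtendedBayesianism m0 m1 π₀ π₁ ∧ 0 < outerM m0 π₀ (spt m1 π₁) := by
  rw [← boundedlyCommensurate_iff_extendedBayesianism hle]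
  exact ⟨fun h => h.boundedlyCommensurate_of_finite hfin, fun h => h.1⟩

/-- Theorem 1: `π₁` is commensurate to `π₀` iff `(π₀, π₁)` satisfies
extended Bayesianism and `π₀*(S₁) > 0`. -/
theorem commensurate_iff_extendedBayesianism {Ω : Type*} [Finite Ω]
    (m0 m1 : MeasurableSpace Ω) (hle : m0 ≤ m1)
    (π₀ : @Measure Ω m0) (π₁ : @Measure Ω m1)
    (h₀ : @IsProbabilityMeasure Ω m0 π₀) (h₁ : @IsProbabilityMeasure Ω m1 π₁) :
    Commensurate m0 m1 π₀ π₁ ↔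
      ExtendedBayesianism m0 m1 π₀ π₁ ∧ 0 < outerM m0 π₀ (spt m1 π₁) :=
  commensurate_iff_extendedBayesianism_general (toFinite _) hle π₀ π₁
end

section
/- Suppose S₁ = S₀, where S₀ is the support of π₀ and S₁ the support of π₁. Then (π₀,π₁) satisfies extended Bayesianism if and only if π₁(E) = π₀(E) for all E ∈ Σ₀, i.e., π₁ is an extension of π₀ to Σ₁. -/
open MeasureTheory Set ENNReal

/-! Conditioning on a set of full measure changes nothing. A support of full measure is
`Σ₀`-measurable, hence of full measure for every extension of `π₀` to `Σ₁`. So when it is also the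
support of `π₁`, (EB2) says that `π₁` is itself such an extension. On a countable space the support
has full measure, because it contains every atom. -/

section

variable {Ω : Type*} {m : MeasurableSpace Ω} {π : Measure Ω} {S E : Set Ω}

theorem measure_eq_one_of_mem_ae [IsProbabilityMeasure π] (hS : S ∈ ae π) : π S = 1 :=
  (measure_congr (Filter.eventuallyEq_univ.2 hS)).trans measure_univ

theorem measure_inter_div_of_mem_ae [IsProbabilityMeasure π] (hS : S ∈ ae π) (E : Set Ω) :
    π (E ∩ S) / π S = π E := by
  rw [measure_eq_one_of_mem_ae hS, div_one, measure_inter_conull hS]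

theorem outerM_eq_measure (m : MeasurableSpace Ω) (π : Measure Ω) (E : Set Ω) :
    outerM m π E = π E := by
  simp only [outerM, measure_eq_iInf E, and_comm (b := E ⊆ _), iInf_and]

theorem spt_subset (hE : MeasurableSet E) (hE_one : π E = 1) : spt m π ⊆ E :=
  sInter_subset_of_mem ⟨hE, hE_one⟩

theorem spt_mem_ae [Countable Ω] (m : MeasurableSpace Ω) (π : Measure Ω)
    [IsProbabilityMeasure π] : spt m π ∈ ae π := by
  refine ae_iff_of_countable.2 fun ω hω E ⟨hE, hE_one⟩ => ?_
  by_contra hωE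
  have hE_compl : π Eᶜ = 0 := (prob_compl_eq_zero_iff hE).2 hE_one
  exact hω (measure_mono_null (singleton_subset_iff.2 hωE) hE_compl)

theorem measurableSet_spt_of_mem_ae [IsProbabilityMeasure π] (hS : spt m π ∈ ae π) :
    MeasurableSet (spt m π) := by
  obtain ⟨N, hN_sub, hN, hN_null⟩ := exists_measurable_superset_of_null hS
  have hN_compl : π Nᶜ = 1 := (prob_compl_eq_one_iff hN).2 hN_null
  have hspt : spt m π = Nᶜ :=
    (spt_subset hN.compl hN_compl).antisymm (compl_subset_comm.1 hN_sub)
  exact hspt ▸ hN.compl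

end

theorem spt_mem_ae_of_extension {Ω : Type*} {m0 m1 : MeasurableSpace Ω} {π₀ : @Measure Ω m0}
    {π : @Measure Ω m1} [@IsProbabilityMeasure Ω m0 π₀] (hS : spt m0 π₀ ∈ ae π₀)
    (hext : ∀ E : Set Ω, @MeasurableSet Ω m0 E → π E = π₀ E) : spt m0 π₀ ∈ ae π :=
  (hext _ (measurableSet_spt_of_mem_ae hS).compl).trans hS

theorem extendedBayesianism_iff_extension_of_support_eq_general {Ω : Type*}
    (m0 m1 : MeasurableSpace Ω) (hle : m0 ≤ m1)
    (π₀ : @Measure Ω m0) (π₁ : @Measure Ω m1)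
    (h₀ : @IsProbabilityMeasure Ω m0 π₀) (h₁ : @IsProbabilityMeasure Ω m1 π₁)
    (hS : spt m0 π₀ ∈ ae π₀) (hspt : spt m1 π₁ = spt m0 π₀) :
    ExtendedBayesianism m0 m1 π₀ π₁ ↔
      ∀ E : Set Ω, @MeasurableSet Ω m0 E → π₁ E = π₀ E := by
  unfold ExtendedBayesianism
  rw [hspt, outerM_eq_measure]
  constructor
  · rintro ⟨πb, hπb, hext, hcond⟩ E hE
    have hS_pos : 0 < π₀ (spt m0 π₀) := by simp [measure_eq_one_of_mem_ae hS]
    calc π₁ E = πb (E ∩ spt m0 π₀) / πb (spt m0 π₀) := (hcond hS_pos).2 E (hle E hE)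
      _ = πb E := measure_inter_div_of_mem_ae (spt_mem_ae_of_extension hS hext) E
      _ = π₀ E := hext E hE
  · intro hext
    have hS₁ : spt m0 π₀ ∈ ae π₁ := spt_mem_ae_of_extension hS hext
    have hS₁_pos : 0 < π₁ (spt m0 π₀) := by simp [measure_eq_one_of_mem_ae hS₁]
    exact ⟨π₁, h₁, hext, fun _ => ⟨hS₁_pos, fun E _ => (measure_inter_div_of_mem_ae hS₁ E).symm⟩⟩

/-- Example 3: if `S₁ = S₀`, then `(π₀, π₁)` satisfies extended Bayesianism
iff `π₁` is an extension of `π₀` to `Σ₁`. -/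
theorem extendedBayesianism_iff_extension_of_support_eq {Ω : Type*} [Finite Ω]
    (m0 m1 : MeasurableSpace Ω) (hle : m0 ≤ m1)
    (π₀ : @Measure Ω m0) (π₁ : @Measure Ω m1)
    (h₀ : @IsProbabilityMeasure Ω m0 π₀) (h₁ : @IsProbabilityMeasure Ω m1 π₁)
    (hspt : spt m1 π₁ = spt m0 π₀) :
    ExtendedBayesianism m0 m1 π₀ π₁ ↔
      ∀ E : Set Ω, @MeasurableSet Ω m0 E → π₁ E = π₀ E :=
  extendedBayesianism_iff_extension_of_support_eq_general m0 m1 hle π₀ π₁ h₀ h₁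
    (spt_mem_ae m0 π₀) hspt
end

section
/- Suppose (π₀,π₁) satisfies extended Bayesianism with witness π̄ and π₀*(S₁) > 0. Then for every F ∈ Σ₀ with π₁(F) > 0, π₀(F)/π₁(F) ≥ π̄(S₁) > 0; consequently inf{π₀(F)/π₁(F) : F ∈ Σ₀, π₁(F) > 0} > 0. -/
open MeasureTheory Set ENNReal

section Conditioning

open ProbabilityTheory

variable {Ω : Type*}

lemma eq_cond_of_forall_eq_inter_div [MeasurableSpace Ω] {μ ν : Measure Ω} {s : Set Ω}
    (h : ∀ t, MeasurableSet t → ν t = μ (t ∩ s) / μ s) : ν = μ[|s] :=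
  Measure.ext fun t ht => by rw [h t ht, cond_apply' ht, inter_comm, ENNReal.div_eq_inv_mul]

lemma measure_mul_cond_le [MeasurableSpace Ω] (μ : Measure Ω) (s t : Set Ω) :
    μ s * μ[t | s] ≤ μ t :=
  calc
    μ s * μ[t | s] = μ s * (μ s)⁻¹ * μ.restrict s t := (mul_assoc _ _ _).symm
    _ ≤ 1 * μ t := mul_le_mul' (ENNReal.mul_inv_le_one _) (Measure.restrict_apply_le s t)
    _ = μ t := one_mul _

lemma measure_le_div_cond [MeasurableSpace Ω] (μ : Measure Ω) {s t : Set Ω}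
    (h : μ[t | s] ≠ 0) : μ s ≤ μ t / μ[t | s] :=
  (ENNReal.le_div_iff_mul_le (.inl h) (.inl (measure_ne_top _ _))).mpr (measure_mul_cond_le μ s t)

theorem witness_bounds_ratio_general {m0 m1 : MeasurableSpace Ω} (hle : m0 ≤ m1)
    {π₀ : Measure[m0] Ω} {π₁ πb : Measure[m1] Ω} [IsProbabilityMeasure π₁] {S : Set Ω}
    (hprior : πb.trim hle = π₀) (hposterior : π₁ = πb[|S]) :
    (∀ F : Set Ω, MeasurableSet[m0] F → 0 < π₁ F → πb S ≤ π₀ F / π₁ F) ∧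
      0 < πb S ∧
      0 < ⨅ (F : Set Ω) (_ : MeasurableSet[m0] F ∧ 0 < π₁ F), π₀ F / π₁ F := by
  have hS : 0 < πb S := by
    have hcond : πb[|S] ≠ 0 := hposterior ▸ IsProbabilityMeasure.ne_zero π₁
    exact pos_iff_ne_zero.mpr fun h => hcond (cond_eq_zero_of_meas_eq_zero h)
  have hratio : ∀ F : Set Ω, MeasurableSet[m0] F → 0 < π₁ F → πb S ≤ π₀ F / π₁ F := by
    intro F hF hF_pos
    rw [hposterior] at hF_pos ⊢
    rw [← hprior, trim_measurableSet_eq hle hF]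
    exact measure_le_div_cond πb hF_pos.ne'
  exact ⟨hratio, hS, hS.trans_le (le_iInf₂ fun F hF => hratio F hF.1 hF.2)⟩

end Conditioning

/-- if `(π₀, π₁)` satisfies extended Bayesianism with witness `π̄` and
`π₀*(S₁) > 0`, then for every `F ∈ Σ₀` with `π₁ F > 0`, `π₀ F / π₁ F ≥ π̄ S₁ > 0`;
consequently `inf {π₀ F / π₁ F : F ∈ Σ₀, π₁ F > 0} > 0`. -/
theorem witness_bounds_ratio {Ω : Type*} [Countable Ω]
    (m0 m1 : MeasurableSpace Ω) (hle : m0 ≤ m1)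
    (π₀ : @Measure Ω m0) (π₁ : @Measure Ω m1)
    (h₀ : @IsProbabilityMeasure Ω m0 π₀) (h₁ : @IsProbabilityMeasure Ω m1 π₁)
    (πb : @Measure Ω m1) (hb : @IsProbabilityMeasure Ω m1 πb)
    (hEB1 : ∀ E : Set Ω, @MeasurableSet Ω m0 E → πb E = π₀ E)
    (hEB2 : 0 < outerM m0 π₀ (spt m1 π₁) →
      0 < πb (spt m1 π₁) ∧
      ∀ E : Set Ω, @MeasurableSet Ω m1 E →
        π₁ E = πb (E ∩ spt m1 π₁) / πb (spt m1 π₁))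
    (hpos : 0 < outerM m0 π₀ (spt m1 π₁)) :
    (∀ F : Set Ω, @MeasurableSet Ω m0 F → 0 < π₁ F → πb (spt m1 π₁) ≤ π₀ F / π₁ F) ∧
      0 < πb (spt m1 π₁) ∧
      0 < ⨅ (F : Set Ω) (_ : @MeasurableSet Ω m0 F ∧ 0 < π₁ F), π₀ F / π₁ F := by
  have hprior : πb.trim hle = π₀ :=
    @Measure.ext Ω m0 _ _ fun E hE => (trim_measurableSet_eq hle hE).trans (hEB1 E hE)
  exact witness_bounds_ratio_general hle hprior (eq_cond_of_forall_eq_inter_div (hEB2 hpos).2)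
end

section
/- Suppose π₁ is commensurate to π₀ and there exists a nonempty E ∈ Σ₀ with E ⊆ S₁. Then π₁(E) > 0 and π₀(E) > 0, and for every F ∈ Σ₀ with π₁(F) > 0 one has 0 < π₀(E)/π₁(E) ≤ π₀(F)/π₁(F); hence inf{π₀(F)/π₁(F) : F ∈ Σ₀, π₁(F) > 0} = π₀(E)/π₁(E) > 0, so π₁ is boundedly commensurate to π₀. -/
open MeasureTheory Set ENNReal

theorem disjoint_spt_of_measure_eq_zero {Ω : Type*} {m : MeasurableSpace Ω} {π : Measure Ω}
    [IsProbabilityMeasure π] {E : Set Ω} (hE : π E = 0) : Disjoint E (spt m π) := by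
  obtain ⟨N, hEN, hN, hN_null⟩ := exists_measurable_superset_of_null hE
  have hspt : spt m π ⊆ Nᶜ := sInter_subset_of_mem ⟨hN.compl, (prob_compl_eq_one_iff hN).2 hN_null⟩
  exact disjoint_compl_right.mono hEN hspt

theorem measure_pos_of_nonempty_of_subset_spt {Ω : Type*} {m : MeasurableSpace Ω}
    {π : Measure Ω} [IsProbabilityMeasure π] {E : Set Ω} (hEne : E.Nonempty)
    (hES : E ⊆ spt m π) : 0 < π E :=
  pos_of_ne_zero fun hE ↦
    hEne.ne_empty ((disjoint_spt_of_measure_eq_zero hE).eq_bot_of_le hES)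

namespace Commensurate

variable {Ω : Type*} {m0 m1 : MeasurableSpace Ω} {π₀ : @Measure Ω m0} {π₁ : @Measure Ω m1}
  {E F : Set Ω}

theorem measure_pos (hc : Commensurate m0 m1 π₀ π₁) (hF : MeasurableSet[m0] F)
    (hF_pos : 0 < π₁ F) : 0 < π₀ F :=
  pos_of_ne_zero fun hF_null ↦
    hF_pos.ne' ((hc ∅ F (@MeasurableSet.empty Ω m0) hF (empty_subset _)).1 hF_null)

theorem div_le_div (hc : Commensurate m0 m1 π₀ π₁) (hE : MeasurableSet[m0] E)
    (hES : E ⊆ spt m1 π₁) (hF : MeasurableSet[m0] F) (hF_pos : 0 < π₁ F) (hF_fin : π₁ F ≠ ∞) :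
    π₀ E / π₁ E ≤ π₀ F / π₁ F := by
  rw [ENNReal.le_div_iff_mul_le (.inl hF_pos.ne') (.inl hF_fin), ← ENNReal.mul_div_right_comm]
  exact ENNReal.div_le_of_le_mul' (hc E F hE hF hES).2

theorem iInf_div_eq [IsFiniteMeasure π₁] (hc : Commensurate m0 m1 π₀ π₁)
    (hE : MeasurableSet[m0] E) (hES : E ⊆ spt m1 π₁) (hE_pos : 0 < π₁ E) :
    (⨅ (F : Set Ω) (_ : MeasurableSet[m0] F ∧ 0 < π₁ F), π₀ F / π₁ F) = π₀ E / π₁ E :=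
  le_antisymm (iInf₂_le E ⟨hE, hE_pos⟩)
    (le_iInf₂ fun F hF ↦ hc.div_le_div hE hES hF.1 hF.2 (measure_ne_top π₁ F))

end Commensurate

theorem boundedlyCommensurate_of_measurable_subevent_general {Ω : Type*}
    {m0 m1 : MeasurableSpace Ω} {π₀ : @Measure Ω m0} {π₁ : @Measure Ω m1}
    [IsProbabilityMeasure π₁] (hc : Commensurate m0 m1 π₀ π₁) {E : Set Ω}
    (hE : MeasurableSet[m0] E) (hEne : E.Nonempty) (hES : E ⊆ spt m1 π₁) :
    0 < π₁ E ∧ 0 < π₀ E ∧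
      (∀ F : Set Ω, MeasurableSet[m0] F → 0 < π₁ F →
        0 < π₀ E / π₁ E ∧ π₀ E / π₁ E ≤ π₀ F / π₁ F) ∧
      (⨅ (F : Set Ω) (_ : MeasurableSet[m0] F ∧ 0 < π₁ F), π₀ F / π₁ F) = π₀ E / π₁ E ∧
      BoundedlyCommensurate m0 m1 π₀ π₁ := by
  have hE₁ : 0 < π₁ E := measure_pos_of_nonempty_of_subset_spt hEne hES
  have hE₀ : 0 < π₀ E := hc.measure_pos hE hE₁
  have ratio_pos : 0 < π₀ E / π₁ E := ENNReal.div_pos hE₀.ne' (measure_ne_top π₁ E)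
  have iInf_eq := hc.iInf_div_eq hE hES hE₁
  have ratio_le (F : Set Ω) (hF : MeasurableSet[m0] F) (hF₁ : 0 < π₁ F) :
      π₀ E / π₁ E ≤ π₀ F / π₁ F :=
    hc.div_le_div hE hES hF hF₁ (measure_ne_top π₁ F)
  exact ⟨hE₁, hE₀, fun F hF hF₁ ↦ ⟨ratio_pos, ratio_le F hF hF₁⟩, iInf_eq, hc,
    ratio_pos.trans_eq iInf_eq.symm⟩

/-- Remark 3: if `π₁` is commensurate to `π₀` and there is a nonempty
`E ∈ Σ₀` with `E ⊆ S₁`, then `π₁ E > 0`, `π₀ E > 0`, for every `F ∈ Σ₀` with `π₁ F > 0`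
one has `0 < π₀ E / π₁ E ≤ π₀ F / π₁ F`, the infimum of these ratios equals
`π₀ E / π₁ E > 0`, and hence `π₁` is boundedly commensurate to `π₀`. -/
theorem boundedlyCommensurate_of_measurable_subevent {Ω : Type*} [Countable Ω]
    (m0 m1 : MeasurableSpace Ω) (hle : m0 ≤ m1)
    (π₀ : @Measure Ω m0) (π₁ : @Measure Ω m1)
    (h₀ : @IsProbabilityMeasure Ω m0 π₀) (h₁ : @IsProbabilityMeasure Ω m1 π₁)
    (hc : Commensurate m0 m1 π₀ π₁)
    (E : Set Ω) (hE : @MeasurableSet Ω m0 E) (hEne : E.Nonempty) (hES : E ⊆ spt m1 π₁) :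
    0 < π₁ E ∧ 0 < π₀ E ∧
      (∀ F : Set Ω, @MeasurableSet Ω m0 F → 0 < π₁ F →
        0 < π₀ E / π₁ E ∧ π₀ E / π₁ E ≤ π₀ F / π₁ F) ∧
      (⨅ (F : Set Ω) (_ : @MeasurableSet Ω m0 F ∧ 0 < π₁ F), π₀ F / π₁ F)
        = π₀ E / π₁ E ∧
      BoundedlyCommensurate m0 m1 π₀ π₁ := by
  exact boundedlyCommensurate_of_measurable_subevent_general hc hE hEne hES
end

section
/- Let Σ₀ ⊆ Σ₁ ⊆ Σ₂ be σ-algebras on a countable set Ω, with probability measures π₀, π₁, π₂ on Σ₀, Σ₁, Σ₂ respectively. Suppose (π₀,π₁) satisfies extended Bayesianism with witness π̄₀₁, π₀*(S₁) > 0, and π₂ is boundedly commensurate to π₁. Then π₂ is boundedly commensurate to π̄₀₁, i.e., for all E, F ∈ Σ₁ with E ⊆ S₂: π̄₀₁(F) = 0 implies π₂(F) = 0; π̄₀₁(E)·π₂(F) ≤ π₂(E)·π̄₀₁(F); and inf{π̄₀₁(F)/π₂(F) : F ∈ Σ₁, π₂(F) > 0} > 0. -/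
open MeasureTheory Set ENNReal

/-!
Put `c = π̄(S₁)`. Conditioning on `S₁` gives `c • π₁ ≤ π̄`, with equality on the events inside `S₁`.
As `π₂` is absolutely continuous with respect to `π₁`, its support lies in `S₁`, so `π̄ = c • π₁` on
the events inside `S₂`. In each clause of bounded commensurability one may therefore multiply `π₁`
by `c` and then enlarge it to `π̄`.
-/

section Domination

variable {Ω : Type*} {m m' : MeasurableSpace Ω} {μ μ' : Measure[m] Ω} {ν : Measure[m'] Ω}
  {c : ℝ≥0∞}

theorem spt_subset_spt_of_absolutelyContinuous_trim [@IsProbabilityMeasure Ω m μ]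
    [@IsProbabilityMeasure Ω m' ν] (hm : m ≤ m') (hνμ : ν.trim hm ≪ μ) :
    spt m' ν ⊆ spt m μ := by
  rintro ω hω A ⟨hA, hμA⟩
  have hνA : ν Aᶜ = 0 := by
    rw [← trim_measurableSet_eq hm hA.compl]
    exact hνμ ((prob_compl_eq_zero_iff hA).2 hμA)
  exact hω A ⟨hm A hA, (prob_compl_eq_zero_iff (hm A hA)).1 hνA⟩

theorem Commensurate.trim_absolutelyContinuous (h : Commensurate m m' μ ν) (hm : m ≤ m') :
    ν.trim hm ≪ μ :=
  .mk fun F hF hμF ↦ by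
    rw [trim_measurableSet_eq hm hF]
    exact (h ∅ F (@MeasurableSet.empty Ω m) hF (empty_subset _)).1 hμF

theorem Commensurate.of_smul_le (h : Commensurate m m' μ ν) (hc : c ≠ 0) (hle : c • μ ≤ μ')
    (heq : ∀ E, MeasurableSet[m] E → E ⊆ spt m' ν → μ' E = c * μ E) :
    Commensurate m m' μ' ν := by
  refine fun E F hE hF hES ↦ ⟨fun hμ'F ↦ (h E F hE hF hES).1 ?_, ?_⟩
  · exact ((Measure.absolutelyContinuous_smul hc).trans hle.absolutelyContinuous) hμ'F
  · calc μ' E * ν F = c * (μ E * ν F) := by rw [heq E hE hES, mul_assoc]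
      _ ≤ c * (ν E * μ F) := mul_le_mul_right (h E F hE hF hES).2 c
      _ = ν E * (c • μ) F := by rw [Measure.smul_apply, smul_eq_mul, mul_left_comm]
      _ ≤ ν E * μ' F := by gcongr

theorem BoundedlyCommensurate.of_smul_le (h : BoundedlyCommensurate m m' μ ν) (hc : c ≠ 0)
    (hle : c • μ ≤ μ') (heq : ∀ E, MeasurableSet[m] E → E ⊆ spt m' ν → μ' E = c * μ E) :
    BoundedlyCommensurate m m' μ' ν := by
  refine ⟨h.1.of_smul_le hc hle heq, (ENNReal.mul_pos hc h.2.ne').trans_le ?_⟩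
  refine le_iInf₂ fun F hF ↦ ?_
  calc c * ⨅ (G : Set Ω) (_ : MeasurableSet[m] G ∧ 0 < ν G), μ G / ν G
      ≤ c * (μ F / ν F) := by gcongr; exact iInf₂_le F hF
    _ = (c • μ) F / ν F := by rw [Measure.smul_apply, smul_eq_mul, mul_div_assoc]
    _ ≤ μ' F / ν F := by gcongr

end Domination

section Conditioning

variable {Ω : Type*} {m : MeasurableSpace Ω} {μ μ' : Measure Ω} [IsProbabilityMeasure μ] {S : Set Ω}

theorem measure_ne_zero_and_ne_top_of_eq_inter_div
    (hμ : ∀ E, MeasurableSet E → μ E = μ' (E ∩ S) / μ' S) : μ' S ≠ 0 ∧ μ' S ≠ ∞ := by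
  have hdiv : μ' S / μ' S = 1 := by rw [← measure_univ (μ := μ), hμ _ .univ, univ_inter]
  constructor <;> intro hS <;> simp [hS] at hdiv

theorem mul_measure_eq_measure_inter_of_eq_inter_div
    (hμ : ∀ E, MeasurableSet E → μ E = μ' (E ∩ S) / μ' S) {E : Set Ω} (hE : MeasurableSet E) :
    μ' S * μ E = μ' (E ∩ S) := by
  obtain ⟨hS₀, hS⟩ := measure_ne_zero_and_ne_top_of_eq_inter_div hμ
  rw [hμ E hE, ENNReal.mul_div_cancel hS₀ hS]

theorem smul_le_of_eq_inter_div (hμ : ∀ E, MeasurableSet E → μ E = μ' (E ∩ S) / μ' S) :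
    μ' S • μ ≤ μ' :=
  Measure.le_intro fun _ hE _ ↦
    (mul_measure_eq_measure_inter_of_eq_inter_div hμ hE).trans_le (measure_mono inter_subset_left)

end Conditioning

theorem witness_boundedlyCommensurate_general {Ω : Type*} {m₁ m₂ : MeasurableSpace Ω}
    (hm : m₁ ≤ m₂) {π₁ πb : Measure[m₁] Ω} {π₂ : Measure[m₂] Ω}
    [@IsProbabilityMeasure Ω m₁ π₁] [@IsProbabilityMeasure Ω m₂ π₂]
    (hcond : ∀ E, MeasurableSet[m₁] E → π₁ E = πb (E ∩ spt m₁ π₁) / πb (spt m₁ π₁))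
    (hbc : BoundedlyCommensurate m₁ m₂ π₁ π₂) :
    BoundedlyCommensurate m₁ m₂ πb π₂ := by
  have hspt : spt m₂ π₂ ⊆ spt m₁ π₁ :=
    spt_subset_spt_of_absolutelyContinuous_trim hm (hbc.1.trim_absolutelyContinuous hm)
  refine hbc.of_smul_le (measure_ne_zero_and_ne_top_of_eq_inter_div hcond).1
    (smul_le_of_eq_inter_div hcond) fun E hE hES ↦ ?_
  rw [mul_measure_eq_measure_inter_of_eq_inter_div hcond hE,
    inter_eq_self_of_subset_left (hES.trans hspt)]

/-- key step of Theorem 4: if `(π₀, π₁)` satisfies extended Bayesianism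
with witness `π̄₀₁`, `π₀*(S₁) > 0`, and `π₂` is boundedly commensurate to `π₁`, then `π₂`
is boundedly commensurate to `π̄₀₁`. -/
theorem witness_boundedlyCommensurate {Ω : Type*} [Countable Ω]
    (m0 m1 m2 : MeasurableSpace Ω) (hle01 : m0 ≤ m1) (hle12 : m1 ≤ m2)
    (π₀ : @Measure Ω m0) (π₁ : @Measure Ω m1) (π₂ : @Measure Ω m2)
    (h₀ : @IsProbabilityMeasure Ω m0 π₀) (h₁ : @IsProbabilityMeasure Ω m1 π₁)
    (h₂ : @IsProbabilityMeasure Ω m2 π₂)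
    (πb01 : @Measure Ω m1) (hb : @IsProbabilityMeasure Ω m1 πb01)
    (hEB1 : ∀ E : Set Ω, @MeasurableSet Ω m0 E → πb01 E = π₀ E)
    (hpos : 0 < outerM m0 π₀ (spt m1 π₁))
    (hEB2 : 0 < πb01 (spt m1 π₁) ∧
      ∀ E : Set Ω, @MeasurableSet Ω m1 E →
        π₁ E = πb01 (E ∩ spt m1 π₁) / πb01 (spt m1 π₁))
    (hbc : BoundedlyCommensurate m1 m2 π₁ π₂) :
    BoundedlyCommensurate m1 m2 πb01 π₂ := by
  exact witness_boundedlyCommensurate_general hle12 hEB2.2 hbc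
end
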